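/- Let N ≥ 1 and σ > 0 with Nσ > 4, let a, b, c > 0, and define f : [0,∞) → ℝ by f(t) = at² - 2bt - c·t^{Nσ/2}. Then: (i) f'' is decreasing and has a unique zero t_infl > 0, given by t_infl = (8a/(Nσ(Nσ-2)c))^{2/(Nσ-4)}; (ii) f' is increasing on [0, t_infl] and decreasing on [t_infl, ∞), and f'(t_infl) > 0 if and only if a^{1-Nσ/2}·b^{Nσ/2-2}·c < (8/(Nσ(Nσ-2)))·((Nσ-4)/(Nσ-2))^{Nσ/2-2}; (iii) if f'(t_infl) > 0, then there exist a unique t₁ ∈ (0, t_infl) and a unique t₂ ∈ (t_infl, ∞) with f'(t₁) = f'(t₂) = 0, and f is decreasing on [0,t₁], increasing on [t₁,t₂], decreasing on [t₂,∞), and attains its minimum on [0,t₂] at t₁; (iv) if f'(t_infl) > 0 and t₂ ≤ t' < t'', then f(t'') - f(t') ≤ (1/2)(t''-t')²·f''(t₂). -/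

import Mathlib

open Set

theorem aux17 (p a b c : ℝ) (hp : 2 < p) (ha : 0 < a) (hb : 0 < b) (hc : 0 < c)
    (f : ℝ → ℝ) (hf : f = fun t : ℝ => a * t ^ 2 - 2 * b * t - c * t ^ p)
    (s : ℝ) (hs0 : 0 < s) (hs : s ^ (p - 2) = 2 * a / (p * (p - 1) * c)) :
    (StrictAntiOn (fun t => deriv (deriv f) t) (Ici (0 : ℝ)) ∧
      0 < s ∧ deriv (deriv f) s = 0 ∧
      (∀ t : ℝ, 0 < t → deriv (deriv f) t = 0 → t = s)) ∧
    (StrictMonoOn (deriv f) (Icc 0 s) ∧ StrictAntiOn (deriv f) (Ici s) ∧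
      (0 < deriv f s ↔
        a ^ (1 - p) * b ^ (p - 2) * c <
          2 / (p * (p - 1)) * ((p - 2) / (p - 1)) ^ (p - 2))) ∧
    (0 < deriv f s →
      ∃ t₁ t₂ : ℝ, t₁ ∈ Ioo 0 s ∧ t₂ ∈ Ioi s ∧
        deriv f t₁ = 0 ∧ deriv f t₂ = 0 ∧
        (∀ t ∈ Ioo (0 : ℝ) s, deriv f t = 0 → t = t₁) ∧
        (∀ t ∈ Ioi s, deriv f t = 0 → t = t₂) ∧
        StrictAntiOn f (Icc 0 t₁) ∧ StrictMonoOn f (Icc t₁ t₂) ∧ StrictAntiOn f (Ici t₂) ∧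
        (∀ t ∈ Icc (0 : ℝ) t₂, f t₁ ≤ f t) ∧
        (∀ t' t'' : ℝ, t₂ ≤ t' → t' < t'' →
          f t'' - f t' ≤ 1 / 2 * (t'' - t') ^ 2 * deriv (deriv f) t₂)) := by
  have hp1 : 0 < p - 1 := by linarith
  have hp2 : 0 < p - 2 := by linarith
  have hp0 : 0 < p := by linarith
  have hd1 : ∀ t, HasDerivAt f (2 * a * t - 2 * b - c * p * t ^ (p - 1)) t := by
    intro t
    rw [hf]
    have h1 := (Real.hasDerivAt_rpow_const (x := t) (p := p) (Or.inr (by linarith))).const_mul c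
    have h2 := ((hasDerivAt_id t).pow 2).const_mul a
    have h3 := (hasDerivAt_id t).const_mul (2 * b)
    refine HasDerivAt.congr_deriv ((h2.sub h3).sub h1 :) ?_
    simp
    ring
  have hD1 : deriv f = fun t => 2 * a * t - 2 * b - c * p * t ^ (p - 1) :=
    funext fun t => (hd1 t).deriv
  have hd2 : ∀ t, HasDerivAt (deriv f) (2 * a - c * p * (p - 1) * t ^ (p - 2)) t := by
    intro t
    rw [hD1]
    have h1 := (Real.hasDerivAt_rpow_const (x := t) (p := p - 1)
      (Or.inr (by linarith))).const_mul (c * p)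
    have h2 := ((hasDerivAt_id t).const_mul (2 * a)).sub_const (2 * b)
    refine HasDerivAt.congr_deriv (h2.sub h1 :) ?_
    rw [show p - 1 - 1 = p - 2 by ring]
    ring
  have hD2 : deriv (deriv f) = fun t => 2 * a - c * p * (p - 1) * t ^ (p - 2) :=
    funext fun t => (hd2 t).deriv
  have hcp : 0 < c * p * (p - 1) := by positivity
  have hanti : StrictAntiOn (fun t => deriv (deriv f) t) (Ici (0 : ℝ)) := by
    intro x hx y hy hxy
    have := Real.rpow_lt_rpow hx hxy hp2
    simp only [hD2]
    nlinarith
  have hz : deriv (deriv f) s = 0 := by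
    simp only [hD2]
    rw [hs]
    field_simp
    ring
  have hcont1 : Continuous (deriv f) := continuous_iff_continuousAt.2 fun t => (hd2 t).continuousAt
  have hcont0 : Continuous f := continuous_iff_continuousAt.2 fun t => (hd1 t).continuousAt
  have hmono : StrictMonoOn (deriv f) (Icc 0 s) := by
    apply strictMonoOn_of_deriv_pos (convex_Icc _ _) hcont1.continuousOn
    intro x hx
    rw [interior_Icc] at hx
    have := hanti (mem_Ici.2 hx.1.le) (mem_Ici.2 hs0.le) hx.2
    simp only [hz] at this
    exact this
  have hant1 : StrictAntiOn (deriv f) (Ici s) := by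
    apply strictAntiOn_of_deriv_neg (convex_Ici _) hcont1.continuousOn
    intro x hx
    rw [interior_Ici] at hx
    have := hanti (mem_Ici.2 hs0.le) (mem_Ici.2 (hs0.trans hx).le) hx
    simp only [hz] at this
    exact this
  have hpow : ∀ t : ℝ, 0 < t → t ^ (p - 1) = t ^ (p - 2) * t := by
    intro t ht
    rw [show p - 1 = (p - 2) + 1 by ring, Real.rpow_add_one ht.ne']
  refine ⟨⟨hanti, hs0, hz, ?_⟩, ⟨hmono, hant1, ?_⟩, ?_⟩
  · intro t ht h
    exact hanti.injOn (mem_Ici.2 ht.le) (mem_Ici.2 hs0.le) (by simp only [h, hz])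
  · have hfs : deriv f s = 2 * a * ((p - 2) / (p - 1)) * (s - b / a * ((p - 1) / (p - 2))) := by
      rw [hD1]
      simp only []
      rw [hpow s hs0, hs]
      field_simp
      ring
    have hk : 0 < 2 * a * ((p - 2) / (p - 1)) := by positivity
    rw [hfs, mul_pos_iff_of_pos_left hk, sub_pos,
      ← Real.rpow_lt_rpow_iff (z := p - 2) (by positivity) hs0.le hp2, hs,
      Real.mul_rpow (by positivity) (by positivity), Real.div_rpow hb.le ha.le,
      Real.div_rpow hp1.le hp2.le, Real.div_rpow hp2.le hp1.le,
      show 1 - p = -((p - 2) + 1) by ring, Real.rpow_neg ha.le, Real.rpow_add_one ha.ne']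
    have A : 0 < a ^ (p - 2) := by positivity
    have B : 0 < (p - 1) ^ (p - 2) := by positivity
    have C : 0 < (p - 2) ^ (p - 2) := by positivity
    generalize a ^ (p - 2) = A' at *
    generalize (p - 1) ^ (p - 2) = B' at *
    generalize (p - 2) ^ (p - 2) = C' at *
    generalize b ^ (p - 2) = b' at *
    have e1 : (A' * a)⁻¹ * b' * c = (b' / A' * (B' / C')) * (c * C' / (a * B')) := by
      field_simp
    have e2 : 2 / (p * (p - 1)) * (C' / B') =
        (2 * a / (p * (p - 1) * c)) * (c * C' / (a * B')) := by
      field_simp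
    rw [e1, e2, mul_lt_mul_iff_left₀ (by positivity)]
  · intro hpos
    have hf0 : deriv f 0 < 0 := by
      rw [hD1]
      simp [Real.zero_rpow hp1.ne', hb]
    obtain ⟨t₁, ht1, h1⟩ := intermediate_value_Ioo hs0.le hcont1.continuousOn ⟨hf0, hpos⟩
    obtain ⟨T, hT, hfT⟩ : ∃ T, s < T ∧ deriv f T < 0 := by
      have hq : 0 < 2 * a / (c * p) := by positivity
      have hTp : ((2 * a / (c * p)) ^ (1 / (p - 2))) ^ (p - 2) = 2 * a / (c * p) := by
        rw [← Real.rpow_mul hq.le, one_div_mul_cancel hp2.ne', Real.rpow_one]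
      have hT0 : 0 < (2 * a / (c * p)) ^ (1 / (p - 2)) := by positivity
      generalize (2 * a / (c * p)) ^ (1 / (p - 2)) = T at *
      refine ⟨T, ?_, ?_⟩
      · rw [← Real.rpow_lt_rpow_iff hs0.le hT0.le hp2, hs, hTp]
        apply div_lt_div_of_pos_left <;> first | positivity | skip
        nlinarith [mul_pos hc hp0]
      · simp only [hD1]
        rw [hpow T hT0, hTp]
        have : c * p * (2 * a / (c * p) * T) = 2 * a * T := by field_simp
        linarith
    obtain ⟨t₂, ht2, h2⟩ := intermediate_value_Ioo' hT.le hcont1.continuousOn ⟨hfT, hpos⟩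
    have hneg2 : ∀ x, t₂ < x → deriv f x < 0 := by
      intro x hx
      rw [← h2]
      exact hant1 (mem_Ici.2 ht2.1.le) (mem_Ici.2 (ht2.1.trans hx).le) hx
    have hA1 : StrictAntiOn f (Icc 0 t₁) := by
      apply strictAntiOn_of_deriv_neg (convex_Icc _ _) hcont0.continuousOn
      intro x hx
      rw [interior_Icc] at hx
      rw [← h1]
      exact hmono ⟨hx.1.le, (hx.2.trans ht1.2).le⟩ ⟨ht1.1.le, ht1.2.le⟩ hx.2
    have hM : StrictMonoOn f (Icc t₁ t₂) := by
      apply strictMonoOn_of_deriv_pos (convex_Icc _ _) hcont0.continuousOn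
      intro x hx
      rw [interior_Icc] at hx
      rcases le_total x s with h | h
      · rw [← h1]
        exact hmono ⟨ht1.1.le, ht1.2.le⟩ ⟨(ht1.1.trans hx.1).le, h⟩ hx.1
      · rw [← h2]
        exact hant1 (mem_Ici.2 h) (mem_Ici.2 ht2.1.le) hx.2
    have h12 : t₁ < t₂ := ht1.2.trans ht2.1
    refine ⟨t₁, t₂, ht1, ht2.1, h1, h2, ?_, ?_, hA1, hM, ?_, ?_, ?_⟩
    · intro t ht h
      exact hmono.injOn ⟨ht.1.le, ht.2.le⟩ ⟨ht1.1.le, ht1.2.le⟩ (h.trans h1.symm)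
    · intro t ht h
      exact hant1.injOn (mem_Ici.2 (le_of_lt ht)) (mem_Ici.2 ht2.1.le) (h.trans h2.symm)
    · apply strictAntiOn_of_deriv_neg (convex_Ici _) hcont0.continuousOn
      intro x hx
      rw [interior_Ici] at hx
      exact hneg2 x hx
    · intro t ht
      rcases le_total t t₁ with h | h
      · exact hA1.antitoneOn ⟨ht.1, h⟩ ⟨ht1.1.le, le_rfl⟩ h
      · exact hM.monotoneOn ⟨le_rfl, h12.le⟩ ⟨h, ht.2⟩ h
    · intro t' t'' ht' htt
      set K := deriv (deriv f) t₂ with hK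
      have ht20 : 0 < t₂ := hs0.trans ht2.1
      have hh : ∀ x, HasDerivAt (fun x => deriv f x - K * x) (deriv (deriv f) x - K) x := by
        intro x
        have := (hd2 x).differentiableAt.hasDerivAt.sub ((hasDerivAt_id x).const_mul K)
        refine HasDerivAt.congr_deriv this ?_
        simp
      have hhA : AntitoneOn (fun x => deriv f x - K * x) (Ici t₂) := by
        apply antitoneOn_of_deriv_nonpos (convex_Ici _)
        · exact fun x _ => (hh x).continuousAt.continuousWithinAt
        · exact fun x _ => (hh x).differentiableAt.differentiableWithinAt
        · intro x hx
          rw [interior_Ici] at hx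
          rw [(hh x).deriv]
          have := hanti (mem_Ici.2 ht20.le) (mem_Ici.2 (ht20.trans hx).le) hx
          simp only [← hK] at this
          linarith
      have hg : ∀ x, HasDerivAt (fun x => f x - 1 / 2 * (x - t') ^ 2 * K)
          (deriv f x - (x - t') * K) x := by
        intro x
        have h3 := ((((hasDerivAt_id x).sub_const t').pow 2).const_mul (1 / 2 : ℝ)).mul_const K
        have := (hd1 x).differentiableAt.hasDerivAt.sub h3
        refine HasDerivAt.congr_deriv this ?_
        simp
      have hgA : AntitoneOn (fun x => f x - 1 / 2 * (x - t') ^ 2 * K) (Ici t') := by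
        apply antitoneOn_of_deriv_nonpos (convex_Ici _)
        · exact fun x _ => (hg x).continuousAt.continuousWithinAt
        · exact fun x _ => (hg x).differentiableAt.differentiableWithinAt
        · intro x hx
          rw [interior_Ici] at hx
          rw [(hg x).deriv]
          have hx' : t' < x := hx
          have h4 := hhA (mem_Ici.2 ht') (mem_Ici.2 (ht'.trans hx'.le)) hx'.le
          have h5 : deriv f t' ≤ 0 := by
            rcases ht'.eq_or_lt with h | h
            · rw [← h, h2]
            · exact (hneg2 _ h).le
          simp only [] at h4
          linarith
      have := hgA (mem_Ici.2 le_rfl) (mem_Ici.2 htt.le) htt.le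
      simp only [sub_self] at this
      linarith

/-- Elementary properties of `f(t) = a t² - 2 b t - c t^{Nσ/2}` for
`a, b, c > 0` and `Nσ > 4`: monotonicity of `f''`, its unique positive zero `t_infl`
(with explicit formula), the criterion for `f'(t_infl) > 0`, the existence of the two
critical points `t₁ < t_infl < t₂` of `f`, the monotonicity pattern of `f`, the minimality
of `f` at `t₁` on `[0, t₂]`, and the quadratic upper bound beyond `t₂`. -/
theorem stmt17 (N : ℕ) (σ : ℝ) (hN : 1 ≤ N) (hσ : 0 < σ) (hsup : 4 < (N : ℝ) * σ)
    (a b c : ℝ) (ha : 0 < a) (hb : 0 < b) (hc : 0 < c)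
    (f : ℝ → ℝ) (hf : f = fun t : ℝ => a * t ^ 2 - 2 * b * t - c * t ^ ((N : ℝ) * σ / 2))
    (tinfl : ℝ)
    (htinfl : tinfl =
      (8 * a / ((N : ℝ) * σ * ((N : ℝ) * σ - 2) * c)) ^ (2 / ((N : ℝ) * σ - 4))) :
    -- (i)
    (StrictAntiOn (fun t => deriv (deriv f) t) (Ici (0 : ℝ)) ∧
      0 < tinfl ∧ deriv (deriv f) tinfl = 0 ∧
      (∀ t : ℝ, 0 < t → deriv (deriv f) t = 0 → t = tinfl)) ∧
    -- (ii)
    (StrictMonoOn (deriv f) (Icc 0 tinfl) ∧ StrictAntiOn (deriv f) (Ici tinfl) ∧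
      (0 < deriv f tinfl ↔
        a ^ (1 - (N : ℝ) * σ / 2) * b ^ ((N : ℝ) * σ / 2 - 2) * c <
          8 / ((N : ℝ) * σ * ((N : ℝ) * σ - 2)) *
            (((N : ℝ) * σ - 4) / ((N : ℝ) * σ - 2)) ^ ((N : ℝ) * σ / 2 - 2))) ∧
    -- (iii) and (iv)
    (0 < deriv f tinfl →
      ∃ t₁ t₂ : ℝ, t₁ ∈ Ioo 0 tinfl ∧ t₂ ∈ Ioi tinfl ∧
        deriv f t₁ = 0 ∧ deriv f t₂ = 0 ∧
        (∀ t ∈ Ioo (0 : ℝ) tinfl, deriv f t = 0 → t = t₁) ∧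
        (∀ t ∈ Ioi tinfl, deriv f t = 0 → t = t₂) ∧
        StrictAntiOn f (Icc 0 t₁) ∧ StrictMonoOn f (Icc t₁ t₂) ∧ StrictAntiOn f (Ici t₂) ∧
        (∀ t ∈ Icc (0 : ℝ) t₂, f t₁ ≤ f t) ∧
        (∀ t' t'' : ℝ, t₂ ≤ t' → t' < t'' →
          f t'' - f t' ≤ 1 / 2 * (t'' - t') ^ 2 * deriv (deriv f) t₂)) := by
  have key := aux17 ((N : ℝ) * σ / 2) a b c (by linarith) ha hb hc f hf tinfl
  generalize (N : ℝ) * σ = q at *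
  have h2 : 0 < q - 2 := by linarith
  have h4 : 0 < q - 4 := by linarith
  have h0 : 0 < q := by linarith
  have hq : 0 < 8 * a / (q * (q - 2) * c) := by positivity
  have k := key (by rw [htinfl]; positivity) (by
    rw [htinfl, ← Real.rpow_mul hq.le,
      show 2 / (q - 4) * (q / 2 - 2) = 1 by field_simp; ring, Real.rpow_one,
      show q / 2 - 1 = (q - 2) / 2 by ring]
    field_simp
    norm_num)
  have e1 : 2 / (q / 2 * (q / 2 - 1)) = 8 / (q * (q - 2)) := by
    rw [show q / 2 - 1 = (q - 2) / 2 by ring]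
    field_simp
    norm_num
  have e2 : (q / 2 - 2) / (q / 2 - 1) = (q - 4) / (q - 2) := by
    rw [show q / 2 - 1 = (q - 2) / 2 by ring, show q / 2 - 2 = (q - 4) / 2 by ring]
    field_simp
  rw [e1, e2] at k
  exact k
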